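/- Let m_1,…,m_n ∈ ℕ^d, let s_1,…,s_n ∈ ℕ, set m = s_1m_1 + ⋯ + s_nm_n and δ = s_1 + ⋯ + s_n, and let ℓ be a positive integer with ℓ ≥ δ such that gcd(ℓ, m_j) = 1 for some component m_j of m. Then I_{S̄_{ℓ,m}} = ῑ(I_{S̄}) + ⟨F⟩, i.e. the kernel of ψ̄ equals the ideal of K[x_0,…,x_{n+1}] generated by the image under ῑ of the kernel of φ̄ together with the homogeneous binomial F = x_{n+1}^ℓ − x_0^{ℓ−δ}x_1^{s_1}⋯x_n^{s_n}. -/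

import Mathlib

open MvPolynomial

/-!
Divide `f ∈ ker ψ̄` by `F`, which is monic in `x_{n+1}`, to get a remainder
`∑_{k < ℓ} g_k x_{n+1}^k` with `g_k ∈ K[x_0, …, x_n]`. Then `ψ̄` sends `g_k` to `φ̄(g_k)` with
each `t_j` replaced by `t_j^ℓ`. For the `(ℤ/ℓ)^d`-grading in which `t_j` has degree `e_j` and
`u` degree `0`, this image has degree `0`, while `ψ̄(x_{n+1})^k` has degree `k · m`. The
coprimality condition says that `m` has additive order `ℓ` in `(ℤ/ℓ)^d`, so the `ℓ` terms of the
image of the remainder have distinct degrees and vanish one by one. As `t_j ↦ t_j^ℓ` is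
injective, every `g_k` lies in `ker φ̄`.
-/

section KernelOfExtension

variable {A S B : Type*} [CommRing A] [CommRing S] [Semiring B]

theorem eval₂_mem_map_ker_of_map_comp_eq_zero {ι : A →+* S} {ψ : S →+* B} (x : S)
    {q : Polynomial A} (hq : q.map (ψ.comp ι) = 0) :
    q.eval₂ ι x ∈ (RingHom.ker (ψ.comp ι)).map ι := by
  rw [Polynomial.eval₂_eq_sum_range]
  refine Ideal.sum_mem _ fun k _ => Ideal.mul_mem_right _ _ (Ideal.mem_map_of_mem _ ?_)
  rw [RingHom.mem_ker, ← Polynomial.coeff_map, hq, Polynomial.coeff_zero]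

theorem ker_eq_map_ker_comp_sup_span {ι : A →+* S} {ψ : S →+* B} {x : S}
    (hx : Function.Surjective (Polynomial.eval₂RingHom ι x))
    {P : Polynomial A} (hP : P.Monic) (hψP : ψ (P.eval₂ ι x) = 0)
    (hindep : ∀ q : Polynomial A, q.degree < P.degree →
      q.eval₂ (ψ.comp ι) (ψ x) = 0 → q.map (ψ.comp ι) = 0) :
    RingHom.ker ψ = (RingHom.ker (ψ.comp ι)).map ι ⊔ Ideal.span {P.eval₂ ι x} := by
  apply le_antisymm
  · intro f hf
    obtain ⟨p, rfl⟩ := hx f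
    cases subsingleton_or_nontrivial A
    · simp [Subsingleton.elim p 0]
    have hdiv : Polynomial.eval₂RingHom ι x p =
        (p %ₘ P).eval₂ ι x + P.eval₂ ι x * (p /ₘ P).eval₂ ι x := by
      rw [← Polynomial.eval₂_mul, ← Polynomial.eval₂_add, Polynomial.modByMonic_add_div,
        Polynomial.coe_eval₂RingHom]
    have hrem : (p %ₘ P).eval₂ (ψ.comp ι) (ψ x) = 0 := by
      rwa [RingHom.mem_ker, hdiv, map_add, map_mul, hψP, zero_mul, add_zero,
        Polynomial.hom_eval₂] at hf
    rw [hdiv]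
    exact Submodule.add_mem_sup
      (eval₂_mem_map_ker_of_map_comp_eq_zero x
        (hindep _ (Polynomial.degree_modByMonic_lt p hP) hrem))
      (Ideal.mul_mem_right _ _ (Ideal.mem_span_singleton_self _))
  · refine sup_le (Ideal.map_le_iff_le_comap.2 fun a ha => ha) ?_
    rwa [Ideal.span_singleton_le_iff_mem, RingHom.mem_ker]

end KernelOfExtension

theorem eq_zero_of_sum_eq_zero_of_injOn_degree {M κ B σ : Type*} [DecidableEq M]
    [AddCommMonoid B] [SetLike σ B] [AddSubmonoidClass σ B] (𝒜 : M → σ)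
    [DirectSum.Decomposition 𝒜] {s : Finset κ} {c : κ → M} (hc : Set.InjOn c s) {b : κ → B}
    (hb : ∀ k ∈ s, b k ∈ 𝒜 (c k)) (hsum : ∑ k ∈ s, b k = 0) {k : κ} (hk : k ∈ s) : b k = 0 := by
  have hcomp : ∑ i ∈ s, (DirectSum.decompose 𝒜 (b i) (c k) : B) = 0 := by
    simpa using congrArg (fun y => (DirectSum.decompose 𝒜 y (c k) : B)) hsum
  rwa [Finset.sum_eq_single_of_mem k hk fun i hi hik => DirectSum.decompose_of_mem_ne 𝒜 (hb i hi)
    (hc.ne hi hk hik), DirectSum.decompose_of_mem_same 𝒜 (hb k hk)] at hcomp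

theorem map_eq_zero_of_eval₂_eq_zero_of_degree_lt_addOrderOf {M A B σ : Type*} [DecidableEq M]
    [AddLeftCancelMonoid M] [Semiring A] [Semiring B] [SetLike σ B] [AddSubmonoidClass σ B]
    (𝒜 : M → σ) [GradedRing 𝒜] {f : A →+* B} (hf : ∀ a, f a ∈ 𝒜 0) {b : B} {c : M}
    (hb : b ∈ 𝒜 c) (hreg : IsRightRegular b) {q : Polynomial A} (hdeg : q.degree < addOrderOf c)
    (hq : q.eval₂ f b = 0) : q.map f = 0 := by
  have hinj : Set.InjOn (fun k : ℕ => k • c) q.support :=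
    nsmul_injOn_Iio_addOrderOf.mono fun k hk =>
      Nat.cast_lt.1 ((Polynomial.le_degree_of_mem_supp k hk).trans_lt hdeg)
  have hterm : ∀ k ∈ q.support, f (q.coeff k) * b ^ k ∈ 𝒜 (k • c) := fun k _ => by
    simpa using SetLike.mul_mem_graded (hf (q.coeff k)) (SetLike.pow_mem_graded k hb)
  rw [Polynomial.eval₂_eq_sum, Polynomial.sum_def] at hq
  ext k
  rw [Polynomial.coeff_map, Polynomial.coeff_zero]
  by_cases hk : k ∈ q.support
  · exact (hreg.pow k).mul_right_eq_zero_iff.1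
      (eq_zero_of_sum_eq_zero_of_injOn_degree 𝒜 hinj hterm hq hk)
  · rw [Polynomial.notMem_support_iff.1 hk, map_zero]

theorem addOrderOf_natCast_pi {κ : Type*} [Fintype κ] {ℓ : ℕ} {a : κ → ℕ}
    (h : ℓ.Coprime (Finset.univ.gcd a)) : addOrderOf (fun j => (a j : ZMod ℓ)) = ℓ := by
  apply Nat.dvd_antisymm
  · rw [addOrderOf_dvd_iff_nsmul_eq_zero]
    ext j
    simp
  · set k := addOrderOf fun j => (a j : ZMod ℓ)
    have hdvd : ∀ j, ℓ ∣ k * a j := fun j => by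
      rw [← ZMod.natCast_eq_zero_iff, Nat.cast_mul, ← nsmul_eq_mul]
      exact congrFun (addOrderOf_nsmul_eq_zero fun j => (a j : ZMod ℓ)) j
    have hdvd_gcd : ℓ ∣ Finset.univ.gcd fun j => k * a j := Finset.dvd_gcd fun j _ => hdvd j
    rw [Finset.gcd_mul_left, normalize_eq] at hdvd_gcd
    exact h.dvd_of_dvd_mul_right hdvd_gcd

/-- The substitution `X i ↦ X i ^ e i`, the variant of `MvPolynomial.expand` with an exponent for
each variable. -/
noncomputable def powerSubstitution (R : Type*) {σ : Type*} [CommSemiring R] (e : σ → ℕ) :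
    MvPolynomial σ R →ₐ[R] MvPolynomial σ R :=
  aeval fun i => X i ^ e i

theorem powerSubstitution_injective {R σ : Type*} [CommRing R] {e : σ → ℕ} (he : ∀ i, e i ≠ 0) :
    Function.Injective (powerSubstitution R e) := by
  nontriviality R
  have htr : ∀ i, Transcendental R (Polynomial.X ^ e i : Polynomial R) := fun i =>
    (Polynomial.transcendental_X R).pow (Nat.pos_of_ne_zero (he i))
  change AlgebraicIndependent R fun i => (X i : MvPolynomial σ R) ^ e i
  simpa only [map_pow, Polynomial.aeval_X] using algebraicIndependent_polynomial_aeval_X _ htr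

theorem isWeightedHomogeneous_powerSubstitution {R σ M : Type*} [CommSemiring R]
    [AddCommMonoid M] {w : σ → M} {e : σ → ℕ} (hw : ∀ i, e i • w i = 0) (p : MvPolynomial σ R) :
    IsWeightedHomogeneous w (powerSubstitution R e p) 0 := by
  induction p using MvPolynomial.induction_on with
  | C a => simpa [powerSubstitution] using isWeightedHomogeneous_C w a
  | add p q hp hq => simpa only [map_add] using hp.add hq
  | mul_X p i hp =>
    have hX := (isWeightedHomogeneous_X R w i).pow (e i)
    rw [hw i] at hX
    simpa [powerSubstitution] using hp.mul hX

theorem surjective_eval₂RingHom_rename_castSucc_X_last (R : Type*) [CommSemiring R] (n : ℕ) :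
    Function.Surjective (Polynomial.eval₂RingHom
      (rename (R := R) (Fin.castSucc : Fin n → Fin (n + 1))).toRingHom (X (Fin.last n))) := by
  rw [← RingHom.rangeS_eq_top, eq_top_iff]
  intro f _
  induction f using MvPolynomial.induction_on with
  | C a => exact ⟨Polynomial.C (C a), by simp⟩
  | add f g hf hg => exact add_mem (hf trivial) (hg trivial)
  | mul_X f i hf =>
    refine mul_mem (hf trivial) ?_
    induction i using Fin.lastCases with
    | cast i => exact ⟨Polynomial.C (X i), by simp⟩
    | last => exact ⟨Polynomial.X, by simp⟩

section HomogenizedMonomial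

/-- The monomial `u · t^a` in the parameters `t_1, …, t_d, u`, with `u` as the last variable. -/
noncomputable def homogenizedMonomial (R : Type*) [CommSemiring R] {d : ℕ} (a : Fin d → ℕ) :
    MvPolynomial (Fin (d + 1)) R :=
  X (Fin.last d) * ∏ j, X j.castSucc ^ a j

variable {R : Type*} [CommSemiring R] {d : ℕ}

theorem isRegular_homogenizedMonomial (a : Fin d → ℕ) : IsRegular (homogenizedMonomial R a) :=
  isRegular_X.mul (.prod fun j _ => isRegular_X_pow (a j))

theorem prod_homogenizedMonomial_pow {κ : Type*} (t : Finset κ) (m : κ → Fin d → ℕ) (s : κ → ℕ) :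
    ∏ i ∈ t, homogenizedMonomial R (m i) ^ s i =
      X (Fin.last d) ^ (∑ i ∈ t, s i) * ∏ j, X j.castSucc ^ (∑ i ∈ t, s i * m i j) := by
  simp only [homogenizedMonomial, mul_pow, Finset.prod_mul_distrib, Finset.prod_pow_eq_pow_sum,
    ← Finset.prod_pow, ← pow_mul]
  rw [Finset.prod_comm]
  simp only [Finset.prod_pow_eq_pow_sum, mul_comm]

/-- The grading of `R[t_1, …, t_d, u]` by `(ℤ/ℓ)^d` in which `t_j` has degree the `j`-th unit
vector and `u` has degree `0`. -/
def exponentWeight (d ℓ : ℕ) : Fin (d + 1) → Fin d → ZMod ℓ :=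
  Fin.snoc (fun j => Pi.single j 1) 0

theorem isWeightedHomogeneous_homogenizedMonomial (ℓ : ℕ) (a : Fin d → ℕ) :
    IsWeightedHomogeneous (exponentWeight d ℓ) (homogenizedMonomial R a)
      fun j => (a j : ZMod ℓ) := by
  have hdeg : (fun j => (a j : ZMod ℓ)) =
      exponentWeight d ℓ (Fin.last d) + ∑ j, a j • exponentWeight d ℓ j.castSucc := by
    ext j
    simp [exponentWeight, Finset.sum_apply, Pi.single_apply]
  rw [hdeg]
  exact (isWeightedHomogeneous_X R _ _).mul
    (.prod _ _ _ fun j _ => (isWeightedHomogeneous_X R _ _).pow (a j))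

theorem map_eq_zero_of_eval₂_homogenizedMonomial_eq_zero {A : Type*} [Semiring A] {ℓ : ℕ}
    {f : A →+* MvPolynomial (Fin (d + 1)) R}
    (hf : ∀ p, IsWeightedHomogeneous (exponentWeight d ℓ) (f p) 0) {a : Fin d → ℕ}
    (ha : ℓ.Coprime (Finset.univ.gcd a)) {q : Polynomial A} (hdeg : q.degree < ℓ)
    (hq : q.eval₂ f (homogenizedMonomial R a) = 0) : q.map f = 0 := by
  let _ := weightedGradedAlgebra R (exponentWeight d ℓ)
  refine map_eq_zero_of_eval₂_eq_zero_of_degree_lt_addOrderOf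
    (weightedHomogeneousSubmodule R (exponentWeight d ℓ)) hf
    (isWeightedHomogeneous_homogenizedMonomial ℓ a) (isRegular_homogenizedMonomial a).right ?_ hq
  rwa [addOrderOf_natCast_pi ha]

/-- The endomorphism `t_j ↦ t_j ^ ℓ`, `u ↦ u` of `R[t_1, …, t_d, u]`, which turns the
parametrization by `m_1, …, m_n` into the one by `ℓ m_1, …, ℓ m_n`. -/
noncomputable def exponentDilation (R : Type*) [CommSemiring R] (d ℓ : ℕ) :
    MvPolynomial (Fin (d + 1)) R →ₐ[R] MvPolynomial (Fin (d + 1)) R :=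
  powerSubstitution R (Fin.snoc (fun _ => ℓ) 1)

theorem exponentDilation_X_last (ℓ : ℕ) :
    exponentDilation R d ℓ (X (Fin.last d)) = X (Fin.last d) := by
  simp [exponentDilation, powerSubstitution]

theorem exponentDilation_X_castSucc (ℓ : ℕ) (j : Fin d) :
    exponentDilation R d ℓ (X j.castSucc) = X j.castSucc ^ ℓ := by
  simp [exponentDilation, powerSubstitution]

theorem exponentDilation_homogenizedMonomial (ℓ : ℕ) (a : Fin d → ℕ) :
    exponentDilation R d ℓ (homogenizedMonomial R a) = homogenizedMonomial R fun j => ℓ * a j := by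
  simp [homogenizedMonomial, exponentDilation_X_last, exponentDilation_X_castSucc, pow_mul]

theorem exponentDilation_injective {R : Type*} [CommRing R] {ℓ : ℕ} (hℓ : ℓ ≠ 0) :
    Function.Injective (exponentDilation R d ℓ) := by
  refine powerSubstitution_injective fun i => ?_
  induction i using Fin.lastCases with
  | last => simp
  | cast j => simpa using hℓ

theorem isWeightedHomogeneous_exponentDilation (ℓ : ℕ) (p : MvPolynomial (Fin (d + 1)) R) :
    IsWeightedHomogeneous (exponentWeight d ℓ) (exponentDilation R d ℓ p) 0 := by
  refine isWeightedHomogeneous_powerSubstitution (fun i => ?_) p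
  induction i using Fin.lastCases with
  | last => simp [exponentWeight]
  | cast j => simp [exponentWeight, ← Pi.single_smul]

end HomogenizedMonomial

section ProjectiveClosure

/-- The homomorphism `x_0 ↦ u`, `x_i ↦ u · t^{m_i}`, whose kernel is the toric ideal of the
projective closure of the affine toric variety with exponent vectors `m_1, …, m_n`. -/
noncomputable def projectiveParametrization (R : Type*) [CommSemiring R] {d n : ℕ}
    (m : Fin n → Fin d → ℕ) :
    MvPolynomial (Fin (n + 1)) R →ₐ[R] MvPolynomial (Fin (d + 1)) R :=
  aeval (Fin.cases (X (Fin.last d)) fun i => homogenizedMonomial R (m i))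

/-- The exponent vectors `ℓ m_1, …, ℓ m_n, s_1 m_1 + ⋯ + s_n m_n` of the extension. -/
def extensionExponents {d n : ℕ} (m : Fin n → Fin d → ℕ) (s : Fin n → ℕ) (ℓ : ℕ) :
    Fin (n + 1) → Fin d → ℕ :=
  Fin.snoc (fun i j => ℓ * m i j) fun j => ∑ i, s i * m i j

/-- The monomial `x_0^(ℓ-δ) x_1^{s_1} ⋯ x_n^{s_n}` with `δ = s_1 + ⋯ + s_n`, homogeneous of
degree `ℓ` when `δ ≤ ℓ`. -/
noncomputable def extensionMonomial (R : Type*) [CommSemiring R] {n : ℕ} (s : Fin n → ℕ) (ℓ : ℕ) :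
    MvPolynomial (Fin (n + 1)) R :=
  X 0 ^ (ℓ - ∑ i, s i) * ∏ i, X i.succ ^ s i

variable {R : Type*} [CommSemiring R] {d n : ℕ}

theorem projectiveParametrization_extensionMonomial (m : Fin n → Fin d → ℕ) {s : Fin n → ℕ}
    {ℓ : ℕ} (hδ : ∑ i, s i ≤ ℓ) :
    projectiveParametrization R m (extensionMonomial R s ℓ) =
      X (Fin.last d) ^ ℓ * ∏ j, X j.castSucc ^ (∑ i, s i * m i j) := by
  simp [projectiveParametrization, extensionMonomial, prod_homogenizedMonomial_pow, ← mul_assoc,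
    ← pow_add, Nat.sub_add_cancel hδ]

theorem projectiveParametrization_extensionExponents_rename (m : Fin n → Fin d → ℕ)
    (s : Fin n → ℕ) (ℓ : ℕ) (p : MvPolynomial (Fin (n + 1)) R) :
    projectiveParametrization R (extensionExponents m s ℓ) (rename Fin.castSucc p) =
      exponentDilation R d ℓ (projectiveParametrization R m p) := by
  suffices hcomp : (projectiveParametrization R (extensionExponents m s ℓ)).comp
      (rename Fin.castSucc) = (exponentDilation R d ℓ).comp (projectiveParametrization R m) from
    DFunLike.congr_fun hcomp p
  ext1 i
  induction i using Fin.cases with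
  | zero => simp [projectiveParametrization, exponentDilation_X_last]
  | succ i =>
    simp [projectiveParametrization, exponentDilation_homogenizedMonomial, extensionExponents,
      Fin.castSucc_succ]

theorem ker_projectiveParametrization_extensionExponents_comp_rename {R : Type*} [CommRing R]
    (m : Fin n → Fin d → ℕ) (s : Fin n → ℕ) {ℓ : ℕ} (hℓ : ℓ ≠ 0) :
    RingHom.ker ((projectiveParametrization R (extensionExponents m s ℓ)).toRingHom.comp
        (rename Fin.castSucc).toRingHom) =
      RingHom.ker (projectiveParametrization R m) := by
  ext p
  simp [RingHom.mem_ker, projectiveParametrization_extensionExponents_rename,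
    map_eq_zero_iff _ (exponentDilation_injective hℓ)]

theorem projectiveParametrization_extensionExponents_X_last (m : Fin n → Fin d → ℕ)
    (s : Fin n → ℕ) (ℓ : ℕ) :
    projectiveParametrization R (extensionExponents m s ℓ) (X (Fin.last (n + 1))) =
      homogenizedMonomial R (fun j => ∑ i, s i * m i j) := by
  rw [projectiveParametrization, aeval_X, ← Fin.succ_last, Fin.cases_succ,
    extensionExponents, Fin.snoc_last]

theorem projectiveParametrization_extensionExponents_rename_extensionMonomial
    (m : Fin n → Fin d → ℕ) {s : Fin n → ℕ} {ℓ : ℕ} (hδ : ∑ i, s i ≤ ℓ) :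
    projectiveParametrization R (extensionExponents m s ℓ)
        (rename Fin.castSucc (extensionMonomial R s ℓ)) =
      homogenizedMonomial R (fun j => ∑ i, s i * m i j) ^ ℓ := by
  rw [projectiveParametrization_extensionExponents_rename,
    projectiveParametrization_extensionMonomial m hδ]
  simp [exponentDilation_X_last, exponentDilation_X_castSucc, homogenizedMonomial, mul_pow,
    ← Finset.prod_pow, ← pow_mul, mul_comm ℓ]

theorem projectiveParametrization_extensionExponents_eq_aeval (m : Fin n → Fin d → ℕ)
    (s : Fin n → ℕ) (ℓ : ℕ) :
    projectiveParametrization R (extensionExponents m s ℓ) = aeval fun i : Fin (n + 2) =>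
      Fin.cases (X (Fin.last d))
        (fun i' : Fin (n + 1) =>
          Fin.lastCases
            (X (Fin.last d) * ∏ j : Fin d, X j.castSucc ^ (∑ k, s k * m k j))
            (fun i'' : Fin n =>
              X (Fin.last d) * ∏ j : Fin d, X j.castSucc ^ (ℓ * m i'' j)) i') i := by
  ext1 i
  induction i using Fin.cases with
  | zero => simp [projectiveParametrization]
  | succ i =>
    induction i using Fin.lastCases <;>
      simp [projectiveParametrization, extensionExponents, homogenizedMonomial,
        -Fin.succ_last]

end ProjectiveClosure

theorem stmt_5_general (R : Type*) [CommRing R] {d n : ℕ} (m : Fin n → Fin d → ℕ)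
    (s : Fin n → ℕ) (ℓ : ℕ) (hℓ : 0 < ℓ) (hδ : ∑ i, s i ≤ ℓ)
    (hgcd : ℓ.Coprime (Finset.univ.gcd fun j => ∑ i, s i * m i j)) :
    RingHom.ker (projectiveParametrization R (extensionExponents m s ℓ)) =
      Ideal.map (rename (Fin.castSucc : Fin (n + 1) → Fin (n + 2)))
          (RingHom.ker (projectiveParametrization R m)) ⊔
        Ideal.span {X (Fin.last (n + 1)) ^ ℓ -
          X 0 ^ (ℓ - ∑ i, s i) * ∏ i : Fin n, X i.succ.castSucc ^ s i} := by
  nontriviality R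
  let ψ := projectiveParametrization R (extensionExponents m s ℓ)
  let ι := rename (R := R) (Fin.castSucc : Fin (n + 1) → Fin (n + 2))
  let P := Polynomial.X ^ ℓ - Polynomial.C (extensionMonomial R s ℓ)
  have hP : P.eval₂ ι.toRingHom (X (Fin.last (n + 1))) = X (Fin.last (n + 1)) ^ ℓ -
      X 0 ^ (ℓ - ∑ i, s i) * ∏ i : Fin n, X i.succ.castSucc ^ s i := by
    simp only [P, Polynomial.eval₂_sub, Polynomial.eval₂_X_pow, Polynomial.eval₂_C]
    simp [ι, extensionMonomial]
  have hψP : ψ (P.eval₂ ι.toRingHom (X (Fin.last (n + 1)))) = 0 := by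
    simp [P, ι, ψ, projectiveParametrization_extensionExponents_X_last,
      projectiveParametrization_extensionExponents_rename_extensionMonomial m hδ]
  rw [← hP, ← ker_projectiveParametrization_extensionExponents_comp_rename m s hℓ.ne']
  refine ker_eq_map_ker_comp_sup_span (surjective_eval₂RingHom_rename_castSucc_X_last R (n + 1))
    (Polynomial.monic_X_pow_sub_C _ hℓ.ne') hψP fun q hdeg hq => ?_
  have hψι : ∀ p, IsWeightedHomogeneous (exponentWeight d ℓ) (ψ (ι p)) 0 := fun p => by
    rw [projectiveParametrization_extensionExponents_rename]
    exact isWeightedHomogeneous_exponentDilation ℓ _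
  rw [Polynomial.degree_X_pow_sub_C hℓ] at hdeg
  refine map_eq_zero_of_eval₂_homogenizedMonomial_eq_zero hψι hgcd hdeg ?_
  rwa [← projectiveParametrization_extensionExponents_X_last (R := R) m s ℓ]

/-- For `ℓ ≥ δ = s_1 + ⋯ + s_n` coprime to some component of
`m = s_1 m_1 + ⋯ + s_n m_n`, the toric ideal of the projective extension
satisfies `I_{S̄_{ℓ,m}} = ῑ(I_{S̄}) + ⟨F⟩`, where
`F = x_{n+1}^ℓ − x_0^{ℓ−δ} x_1^{s_1}⋯x_n^{s_n}`.
Here the variables of `K[x_0,…,x_n]` are indexed by `Fin (n+1)` (with `x_0`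
corresponding to `0`), the variables `t_1,…,t_d,u` are indexed by `Fin (d+1)`
with `u = X (Fin.last d)`, and `ῑ` is the inclusion `Fin.castSucc`. -/
theorem stmt_5 (K : Type*) [Field K] (d n : ℕ)
    (m : Fin n → Fin d → ℕ) (s : Fin n → ℕ) (ℓ : ℕ) (hℓ : 0 < ℓ)
    (hδ : ∑ i, s i ≤ ℓ)
    (hgcd : ∃ j : Fin d, Nat.gcd ℓ (∑ i, s i * m i j) = 1)
    (φbar : MvPolynomial (Fin (n + 1)) K →ₐ[K] MvPolynomial (Fin (d + 1)) K)
    (hφbar : φbar = aeval fun i : Fin (n + 1) =>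
      Fin.cases (X (Fin.last d))
        (fun i' : Fin n =>
          X (Fin.last d) * ∏ j : Fin d, X j.castSucc ^ m i' j) i)
    (ψbar : MvPolynomial (Fin (n + 2)) K →ₐ[K] MvPolynomial (Fin (d + 1)) K)
    (hψbar : ψbar = aeval fun i : Fin (n + 2) =>
      Fin.cases (X (Fin.last d))
        (fun i' : Fin (n + 1) =>
          Fin.lastCases
            (X (Fin.last d) * ∏ j : Fin d, X j.castSucc ^ (∑ k, s k * m k j))
            (fun i'' : Fin n =>
              X (Fin.last d) * ∏ j : Fin d, X j.castSucc ^ (ℓ * m i'' j)) i') i)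
    (F : MvPolynomial (Fin (n + 2)) K)
    (hF : F = X (Fin.last (n + 1)) ^ ℓ -
      X (0 : Fin (n + 2)) ^ (ℓ - ∑ i, s i) *
        ∏ i : Fin n, X (i.succ.castSucc : Fin (n + 2)) ^ s i) :
    RingHom.ker ψbar =
      Ideal.map (rename (Fin.castSucc : Fin (n + 1) → Fin (n + 2))) (RingHom.ker φbar) ⊔
        Ideal.span {F} := by
  obtain ⟨j, hj⟩ := hgcd
  rw [hφbar, hψbar, hF, ← projectiveParametrization_extensionExponents_eq_aeval]
  exact stmt_5_general K m s ℓ hℓ hδ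
    (Nat.Coprime.of_dvd_right (Finset.gcd_dvd (Finset.mem_univ j)) hj)
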